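/- Let φ : ℝ → ℝ be differentiable with φ(0) = 0 and φ'(u) = √(c² + 2·cos θ·B(u) − D²·B(u)²) for all u, where B(u) = λ₁²·cos²(φ u) + λ₂²·sin²(φ u) and D = sin θ / c, and let f : ℝ → ℝ be differentiable with f(0) = 0 and f'(u) = D·B(u) for all u. Then f' and φ' are differentiable and for all u ∈ ℝ: (1) B(u)·f''(u) = −2·(λ₁² − λ₂²)·f'(u)·φ'(u)·sin(φ u)·cos(φ u); (2) B(u)·φ''(u) = (λ₁² − λ₂²)·(f'(u)² − φ'(u)² + c²)·sin(φ u)·cos(φ u). -/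

import Mathlib

open Real

/-- The critical angle `θ_c⁺`. -/
noncomputable def thetaPlus (l1 c : ℝ) : ℝ :=
  if c > Real.sqrt 2 * l1 then π else Real.arccos (1 - c ^ 2 / l1 ^ 2)

/-- The quantity `B(u) = λ₁² cos²(φ u) + λ₂² sin²(φ u)`. -/
noncomputable def Bfun (l1 l2 : ℝ) (φ : ℝ → ℝ) (u : ℝ) : ℝ :=
  l1 ^ 2 * Real.cos (φ u) ^ 2 + l2 ^ 2 * Real.sin (φ u) ^ 2

/-!
A solution of `φ' = √(G φ)` with `G φ > 0` satisfies `φ'' = G'(φ) / 2`: differentiate `φ'² = G φ`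
and cancel `2 φ'`. Here `G = c² + 2 k b - D² b²` with `b t = l1² cos² t + l2² sin² t`, so that
`φ'' = (k - D² b) b'` and `f'² - φ'² + c² = -2 b (k - D² b)`, which gives the equation for `φ`; the
one for `f` is the chain rule. For `k = cos θ` and `D = sin θ / c` the function `G` factors as
`(c² - (1 - cos θ) b) (c² + (1 + cos θ) b) / c²`, and the bound on `|θ|` keeps the first factor
positive up to the maximal value `b = l1²`.
-/

open scoped Topology

theorem lt_cos_of_abs_lt_arccos {x θ : ℝ} (h : |θ| < arccos x) : x < cos θ := by
  by_contra! hx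
  have arccos_le : arccos x ≤ arccos (cos |θ|) := by
    rw [cos_abs]
    exact arccos_le_arccos hx
  rw [arccos_cos (abs_nonneg θ) (h.le.trans (arccos_le_pi x))] at arccos_le
  exact h.not_ge arccos_le

theorem hasDerivAt_sqrt_of_hasDerivAt_two_mul_sqrt {g : ℝ → ℝ} {a x : ℝ}
    (hg : HasDerivAt g (2 * √(g x) * a) x) (hpos : 0 < g x) :
    HasDerivAt (fun y => √(g y)) a x := by
  have sqrt_ne_zero : √(g x) ≠ 0 := (sqrt_pos.mpr hpos).ne'
  refine (hg.sqrt hpos.ne').congr_deriv ?_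
  field_simp

theorem hasDerivAt_deriv_of_hasDerivAt_sqrt_comp {φ G : ℝ → ℝ} {G' u : ℝ}
    (hφ : ∀ᶠ v in 𝓝 u, HasDerivAt φ (√(G (φ v))) v)
    (hG : HasDerivAt G G' (φ u)) (hpos : 0 < G (φ u)) :
    HasDerivAt (deriv φ) (G' / 2) u := by
  have hG_comp : HasDerivAt (fun v => G (φ v)) (2 * √(G (φ u)) * (G' / 2)) u :=
    (hG.comp u hφ.self_of_nhds).congr_deriv (by ring)
  exact (hasDerivAt_sqrt_of_hasDerivAt_two_mul_sqrt hG_comp hpos).congr_of_eventuallyEq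
    (hφ.mono fun _ hv => hv.deriv)

section Profile

variable {l1 l2 : ℝ} {φ : ℝ → ℝ} {u : ℝ}

theorem Bfun_nonneg : 0 ≤ Bfun l1 l2 φ u := by
  unfold Bfun
  positivity

theorem Bfun_le_sq (h : l2 ^ 2 ≤ l1 ^ 2) : Bfun l1 l2 φ u ≤ l1 ^ 2 :=
  calc
    Bfun l1 l2 φ u ≤ l1 ^ 2 * cos (φ u) ^ 2 + l1 ^ 2 * sin (φ u) ^ 2 := by
      unfold Bfun
      gcongr
    _ = l1 ^ 2 := by rw [← mul_add, cos_sq_add_sin_sq, mul_one]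

theorem hasDerivAt_Bfun {φ' : ℝ} (hφ : HasDerivAt φ φ' u) :
    HasDerivAt (Bfun l1 l2 φ) (-2 * (l1 ^ 2 - l2 ^ 2) * φ' * sin (φ u) * cos (φ u)) u := by
  refine (((hφ.cos.pow 2).const_mul (l1 ^ 2)).add
    ((hφ.sin.pow 2).const_mul (l2 ^ 2))).congr_deriv ?_
  push_cast
  ring

theorem hasDerivAt_deriv_of_hasDerivAt_sqrt_quadratic_Bfun {c k D : ℝ}
    (hφ : ∀ v, HasDerivAt φ
      (√(c ^ 2 + 2 * k * Bfun l1 l2 φ v - D ^ 2 * Bfun l1 l2 φ v ^ 2)) v)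
    (hpos : 0 < c ^ 2 + 2 * k * Bfun l1 l2 φ u - D ^ 2 * Bfun l1 l2 φ u ^ 2) :
    HasDerivAt (deriv φ) (-2 * (l1 ^ 2 - l2 ^ 2) * (k - D ^ 2 * Bfun l1 l2 φ u) *
      sin (φ u) * cos (φ u)) u := by
  -- `Bfun l1 l2 φ v` is definitionally `Bfun l1 l2 id (φ v)`, so the equation is autonomous.
  let G : ℝ → ℝ := fun t => c ^ 2 + 2 * k * Bfun l1 l2 id t - D ^ 2 * Bfun l1 l2 id t ^ 2
  have hB := hasDerivAt_Bfun (l1 := l1) (l2 := l2) (hasDerivAt_id (φ u))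
  have hG : HasDerivAt G (2 * (-2 * (l1 ^ 2 - l2 ^ 2) * (k - D ^ 2 * Bfun l1 l2 φ u) *
      sin (φ u) * cos (φ u))) (φ u) := by
    refine (((hB.const_mul (2 * k)).const_add (c ^ 2)).sub
      ((hB.pow 2).const_mul (D ^ 2))).congr_deriv ?_
    simp only [Bfun, id_eq]
    push_cast
    ring
  exact (hasDerivAt_deriv_of_hasDerivAt_sqrt_comp (G := G) (.of_forall hφ) hG hpos).congr_deriv
    (by ring)

end Profile

theorem thetaPlus_eq_arccos {l1 : ℝ} (hl1 : 0 < l1) (c : ℝ) :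
    thetaPlus l1 c = arccos (1 - c ^ 2 / l1 ^ 2) := by
  unfold thetaPlus
  split_ifs with h
  · have two_lt : 2 < c ^ 2 / l1 ^ 2 := by
      rw [lt_div_iff₀ (by positivity)]
      calc
        2 * l1 ^ 2 = (√2 * l1) ^ 2 := by rw [mul_pow, sq_sqrt zero_le_two]
        _ < c ^ 2 := by gcongr
    exact (arccos_of_le_neg_one (by linarith)).symm
  · rfl

theorem one_sub_cos_mul_sq_lt_sq_of_abs_lt_thetaPlus {l1 c θ : ℝ} (hl1 : 0 < l1)
    (hθ : |θ| < thetaPlus l1 c) : (1 - cos θ) * l1 ^ 2 < c ^ 2 := by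
  rw [thetaPlus_eq_arccos hl1] at hθ
  rw [← lt_div_iff₀ (by positivity)]
  linarith [lt_cos_of_abs_lt_arccos hθ]

theorem quadratic_pos_of_one_sub_cos_mul_lt {c θ b : ℝ} (hc : c ≠ 0) (hb : 0 ≤ b)
    (h : (1 - cos θ) * b < c ^ 2) :
    0 < c ^ 2 + 2 * cos θ * b - (sin θ / c) ^ 2 * b ^ 2 := by
  have factorization : c ^ 2 + 2 * cos θ * b - (sin θ / c) ^ 2 * b ^ 2 =
      (c ^ 2 - (1 - cos θ) * b) * (c ^ 2 + (1 + cos θ) * b) / c ^ 2 := by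
    rw [div_pow, sin_sq]
    field_simp
    ring
  have one_add_cos_nonneg : 0 ≤ 1 + cos θ := by linarith [neg_one_le_cos θ]
  have right_pos : 0 < c ^ 2 + (1 + cos θ) * b := by positivity
  rw [factorization]
  exact div_pos (mul_pos (sub_pos.mpr h) right_pos) (by positivity)

theorem quadratic_Bfun_pos_of_abs_lt_thetaPlus {l1 l2 c θ : ℝ} (hl1 : 0 < l1)
    (hl : l2 ^ 2 ≤ l1 ^ 2) (hc : c ≠ 0) (hθ : |θ| < thetaPlus l1 c) (φ : ℝ → ℝ) (u : ℝ) :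
    0 < c ^ 2 + 2 * cos θ * Bfun l1 l2 φ u - (sin θ / c) ^ 2 * Bfun l1 l2 φ u ^ 2 := by
  refine quadratic_pos_of_one_sub_cos_mul_lt hc Bfun_nonneg ?_
  calc
    (1 - cos θ) * Bfun l1 l2 φ u ≤ (1 - cos θ) * l1 ^ 2 :=
      mul_le_mul_of_nonneg_left (Bfun_le_sq hl) (sub_nonneg.mpr (cos_le_one θ))
    _ < c ^ 2 := one_sub_cos_mul_sq_lt_sq_of_abs_lt_thetaPlus hl1 hθ

theorem catenoid_second_derivatives_general {l1 l2 c k D : ℝ} {φ f : ℝ → ℝ}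
    (hφ : ∀ u, HasDerivAt φ
      (√(c ^ 2 + 2 * k * Bfun l1 l2 φ u - D ^ 2 * Bfun l1 l2 φ u ^ 2)) u)
    (hpos : ∀ u, 0 < c ^ 2 + 2 * k * Bfun l1 l2 φ u - D ^ 2 * Bfun l1 l2 φ u ^ 2)
    (hf : ∀ u, HasDerivAt f (D * Bfun l1 l2 φ u) u) :
    Differentiable ℝ (deriv f) ∧ Differentiable ℝ (deriv φ) ∧
    (∀ u, Bfun l1 l2 φ u * deriv (deriv f) u =
      -2 * (l1 ^ 2 - l2 ^ 2) * deriv f u * deriv φ u * sin (φ u) * cos (φ u)) ∧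
    (∀ u, Bfun l1 l2 φ u * deriv (deriv φ) u =
      (l1 ^ 2 - l2 ^ 2) * (deriv f u ^ 2 - deriv φ u ^ 2 + c ^ 2) * sin (φ u) * cos (φ u)) := by
  have deriv_f : deriv f = fun u => D * Bfun l1 l2 φ u := funext fun u => (hf u).deriv
  have hf'' (u : ℝ) : HasDerivAt (deriv f)
      (D * (-2 * (l1 ^ 2 - l2 ^ 2) * deriv φ u * sin (φ u) * cos (φ u))) u :=
    deriv_f ▸ (hasDerivAt_Bfun (hφ u).differentiableAt.hasDerivAt).const_mul D
  have hφ'' (u : ℝ) := hasDerivAt_deriv_of_hasDerivAt_sqrt_quadratic_Bfun hφ (hpos u)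
  refine ⟨fun u => (hf'' u).differentiableAt, fun u => (hφ'' u).differentiableAt,
    fun u => ?_, fun u => ?_⟩
  · rw [(hf'' u).deriv, deriv_f]
    ring
  · rw [(hφ'' u).deriv, deriv_f, (hφ u).deriv, sq_sqrt (hpos u).le]
    ring

theorem catenoid_second_derivatives
    (l1 l2 c θ : ℝ) (hl : l1 ≥ l2) (hl2 : l2 > 0) (hc : c > 0)
    (hθ : |θ| < thetaPlus l1 c)
    (φ : ℝ → ℝ) (hφ : Differentiable ℝ φ) (hφ0 : φ 0 = 0)
    (hφ' : ∀ u, deriv φ u =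
      Real.sqrt (c ^ 2 + 2 * Real.cos θ * Bfun l1 l2 φ u -
        (Real.sin θ / c) ^ 2 * Bfun l1 l2 φ u ^ 2))
    (f : ℝ → ℝ) (hf : Differentiable ℝ f) (hf0 : f 0 = 0)
    (hf' : ∀ u, deriv f u = (Real.sin θ / c) * Bfun l1 l2 φ u) :
    Differentiable ℝ (deriv f) ∧ Differentiable ℝ (deriv φ) ∧
    (∀ u, Bfun l1 l2 φ u * deriv (deriv f) u =
      -2 * (l1 ^ 2 - l2 ^ 2) * deriv f u * deriv φ u * Real.sin (φ u) * Real.cos (φ u)) ∧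
    (∀ u, Bfun l1 l2 φ u * deriv (deriv φ) u =
      (l1 ^ 2 - l2 ^ 2) * (deriv f u ^ 2 - deriv φ u ^ 2 + c ^ 2) *
        Real.sin (φ u) * Real.cos (φ u)) := by
  have hl1 : 0 < l1 := hl2.trans_le hl
  have hl_sq : l2 ^ 2 ≤ l1 ^ 2 := pow_le_pow_left₀ hl2.le hl 2
  exact catenoid_second_derivatives_general (fun u => hφ' u ▸ (hφ u).hasDerivAt)
    (quadratic_Bfun_pos_of_abs_lt_thetaPlus hl1 hl_sq hc.ne' hθ φ)
    (fun u => hf' u ▸ (hf u).hasDerivAt)
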